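/- arXiv:2506.12789 — 2 statements merged into one kernel-verified Lean document; each statement's English description precedes it below -/
import Mathlib

section
/- Let d be an odd positive integer and n a positive integer. Then the 2-adic valuation of W_d(n) equals s₂(n); i.e., ν₂(W_d(n)) = s₂(n). -/
/-- `Wstar d n` is the number of Abelian squares: the sum over all tuples
`(x₁,…,x_d)` of nonnegative integers summing to `n` of the square of the
multinomial coefficient `n!/(x₁!⋯x_d!)`. -/
def Wstar (d n : ℕ) : ℕ :=
  ∑ x ∈ Finset.Nat.antidiagonalTuple d n, (Nat.multinomial Finset.univ x) ^ 2

/-- `W d n` is the number of `2n`-step closed walks at the origin in `ℤ^d`. -/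
def W (d n : ℕ) : ℕ := Nat.choose (2 * n) n * Wstar d n

/-- `s2 n` is the number of ones in the binary expansion of `n`. -/
def s2 (n : ℕ) : ℕ := (Nat.digits 2 n).sum

/-!
Expanding `(1 + ⋯ + 1) ^ n` with `d` ones by the multinomial theorem gives
`∑ n! / (x₁! ⋯ x_d!) = d ^ n`. Squaring each summand does not change it modulo `2`, so `W*_d(n)`
has the parity of `d ^ n`, and for odd `d` only the central binomial coefficient contributes to the
valuation of `W_d(n)`. By Kummer's theorem that contribution is `2 s₂(n) - s₂(2n)`, and doubling
`n > 0` only appends a `0` to its binary expansion.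
-/

theorem sum_multinomial_piAntidiag {ι : Type*} [DecidableEq ι] (s : Finset ι) (n : ℕ) :
    ∑ x ∈ s.piAntidiag n, Nat.multinomial s x = s.card ^ n := by
  simpa using (s.sum_pow_eq_sum_piAntidiag (fun _ ↦ (1 : ℕ)) n).symm

theorem sum_pow_prime_modEq {ι : Type*} (p : ℕ) [Fact p.Prime] (s : Finset ι) (f : ι → ℕ) :
    ∑ i ∈ s, f i ^ p ≡ ∑ i ∈ s, f i [MOD p] := by
  rw [← ZMod.natCast_eq_natCast_iff]
  push_cast
  simp only [ZMod.pow_card]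

theorem Wstar_modEq_two (d n : ℕ) : Wstar d n ≡ d ^ n [MOD 2] := by
  have sum_multinomial : ∑ x ∈ Finset.Nat.antidiagonalTuple d n,
      Nat.multinomial Finset.univ x = d ^ n := by
    rw [← Finset.piAntidiag_univ_fin_eq_antidiagonalTuple, sum_multinomial_piAntidiag,
      Finset.card_fin]
  exact sum_multinomial ▸ sum_pow_prime_modEq 2 _ _

theorem odd_Wstar {d : ℕ} (hd : Odd d) (n : ℕ) : Odd (Wstar d n) := by
  rw [Nat.odd_iff, Wstar_modEq_two d n, ← Nat.odd_iff]
  exact hd.pow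

theorem sum_digits_base_mul {b : ℕ} (hb : 1 < b) (n : ℕ) :
    (b.digits (b * n)).sum = (b.digits n).sum := by
  rcases n.eq_zero_or_pos with rfl | hn
  · rw [mul_zero]
  · rw [Nat.digits_base_mul hb hn, List.sum_cons, zero_add]

theorem padicValNat_two_centralBinom (n : ℕ) :
    padicValNat 2 n.centralBinom = (Nat.digits 2 n).sum := by
  have kummer := sub_one_mul_padicValNat_choose_eq_sub_sum_digits' (p := 2) (k := n) (n := n)
  rwa [← two_mul n, sum_digits_base_mul one_lt_two, Nat.add_sub_cancel, Nat.add_one_sub_one,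
    one_mul] at kummer

theorem stmt_0 (d n : ℕ) (hd : 0 < d) (hodd : Odd d) (hn : 0 < n) :
    padicValNat 2 (W d n) = s2 n := by
  have wstar_odd : Odd (Wstar d n) := odd_Wstar hodd n
  calc padicValNat 2 (W d n)
      = padicValNat 2 n.centralBinom + padicValNat 2 (Wstar d n) :=
        padicValNat.mul n.centralBinom_ne_zero wstar_odd.pos.ne'
    _ = padicValNat 2 n.centralBinom := by
        rw [padicValNat.eq_zero_of_not_dvd wstar_odd.not_two_dvd_nat, add_zero]
    _ = s2 n := padicValNat_two_centralBinom n
end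

section
/- Let d be a positive integer with ν₂(d) = 2 (i.e., d ≡ 4 (mod 8)) and let n be a positive integer. Then ν₂(W_d(n)) ≥ 3·s₂(n). -/
/-!
For `d = 4` the numbers `Wstar d n` are the Domb numbers
`∑ₐ C(n,a)² C(2a,a) C(2(n-a),n-a) = ∑ₐ C(n,a)³ S(a,n-a)`, where `S` is the super Catalan function.
MacMahon's identity, a consequence of three applications of Vandermonde's, expands `C(n,a)³` as
`∑ⱼ M(n,j) C(n-2j,a-j)` with `M(n,j) = (n+j)!/(j!³(n-2j)!)`, and the recurrence
`S(a+1,b) + S(a,b+1) = 4 S(a,b)` evaluates the remaining sum over `a`. The outcome is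
`∑ⱼ M(n,j) C(2j,j) 4^(n-2j)`. Since `C(2j,j)` divides `M(n,j)`, the `j`-th term is divisible by
`4 ^ (s2 j + (n-2j))`, and `s2 n ≤ s2 (2j) + s2 (n-2j) ≤ s2 j + (n-2j)`. The divisibility passes to
all multiples of `4` through the convolution formula for `Wstar (c + d) n`, because `s2` is
subadditive.
-/

open Finset hiding antidiagonal mem_antidiagonal
open Finset.HasAntidiagonal
open scoped Nat

section BinaryDigitSum

theorem s2_le_self (n : ℕ) : s2 n ≤ n :=
  Nat.digit_sum_le 2 n

theorem s2_two_mul (n : ℕ) : s2 (2 * n) = s2 n := by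
  rcases n.eq_zero_or_pos with rfl | hn
  · rfl
  · simp [s2, Nat.digits_base_mul one_lt_two hn]

theorem padicValNat_factorial_add_s2 (n : ℕ) : padicValNat 2 n ! + s2 n = n := by
  have legendre : (2 - 1) * padicValNat 2 n ! = n - s2 n := sub_one_mul_padicValNat_factorial n
  have := s2_le_self n
  lia

theorem padicValNat_add_choose_add_s2 (a b : ℕ) :
    padicValNat 2 ((a + b).choose a) + s2 (a + b) = s2 a + s2 b := by
  have hval : padicValNat 2 ((a + b).choose a) + padicValNat 2 a ! + padicValNat 2 b ! =
      padicValNat 2 (a + b)! := by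
    have hchoose : (a + b).choose a ≠ 0 := (Nat.choose_pos (Nat.le_add_right a b)).ne'
    rw [← Nat.add_choose_mul_factorial_mul_factorial a b, ← Nat.choose_symm_add,
      padicValNat.mul (mul_ne_zero hchoose a.factorial_ne_zero) b.factorial_ne_zero,
      padicValNat.mul hchoose a.factorial_ne_zero]
  have ha := padicValNat_factorial_add_s2 a
  have hb := padicValNat_factorial_add_s2 b
  have hab := padicValNat_factorial_add_s2 (a + b)
  lia

theorem s2_add_le (a b : ℕ) : s2 (a + b) ≤ s2 a + s2 b :=
  (Nat.le_add_left _ _).trans_eq (padicValNat_add_choose_add_s2 a b)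

theorem padicValNat_centralBinom (n : ℕ) : padicValNat 2 n.centralBinom = s2 n := by
  have := padicValNat_add_choose_add_s2 n n
  rw [← two_mul, s2_two_mul] at this
  rw [Nat.centralBinom_eq_two_mul_choose]
  lia

theorem two_pow_s2_dvd_centralBinom (n : ℕ) : 2 ^ s2 n ∣ n.centralBinom := by
  rw [← padicValNat_centralBinom]
  exact pow_padicValNat_dvd

end BinaryDigitSum

section Convolution

/-- The power series `∑ xⁿ / n!²`, that is `I₀(2√x)` for the modified Bessel function `I₀`. Its
powers are the generating functions of the numbers `Wstar d n / n!²`. -/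
def besselSeries : PowerSeries ℚ :=
  PowerSeries.mk fun n => ((n ! : ℚ) ^ 2)⁻¹

theorem cast_multinomial {ι K : Type*} [Field K] [CharZero K] (s : Finset ι) (f : ι → ℕ) :
    (Nat.multinomial s f : K) = (∑ i ∈ s, f i)! / ∏ i ∈ s, ((f i)! : K) := by
  have hprod : ∏ i ∈ s, ((f i)! : K) ≠ 0 :=
    prod_ne_zero_iff.mpr fun i _ => mod_cast (f i).factorial_ne_zero
  rw [eq_div_iff hprod, mul_comm]
  exact_mod_cast Nat.multinomial_spec s f

theorem coeff_besselSeries_pow (d n : ℕ) :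
    PowerSeries.coeff n (besselSeries ^ d) = Wstar d n / (n ! : ℚ) ^ 2 := by
  have hn : (n ! : ℚ) ≠ 0 := mod_cast n.factorial_ne_zero
  rw [← Fin.prod_const, PowerSeries.coeff_prod, Wstar, Nat.cast_sum, sum_div]
  refine sum_nbij' (⇑) Finsupp.equivFunOnFinite.symm ?_ ?_ ?_ ?_ ?_
  · intro l hl
    simpa [Finset.Nat.mem_antidiagonalTuple] using hl
  · intro x hx
    simpa [Finset.Nat.mem_antidiagonalTuple] using hx
  · intro l _
    exact Finsupp.equivFunOnFinite.symm_apply_apply l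
  · intro x _
    exact Finsupp.equivFunOnFinite.apply_symm_apply x
  · intro l hl
    simp only [besselSeries, PowerSeries.coeff_mk, Nat.cast_pow, prod_inv_distrib,
      prod_pow, cast_multinomial, (mem_finsuppAntidiag.mp hl).1]
    field_simp

theorem Wstar_add (c d n : ℕ) :
    Wstar (c + d) n =
      ∑ p ∈ antidiagonal n, n.choose p.1 ^ 2 * (Wstar c p.1 * Wstar d p.2) := by
  have hfact (k : ℕ) : (k ! : ℚ) ≠ 0 := mod_cast k.factorial_ne_zero
  have hcoeff := congrArg (PowerSeries.coeff n) (pow_add besselSeries c d)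
  simp only [PowerSeries.coeff_mul, coeff_besselSeries_pow] at hcoeff
  rw [div_eq_iff (pow_ne_zero 2 (hfact n)), sum_mul] at hcoeff
  refine Nat.cast_injective (R := ℚ) ?_
  rw [hcoeff, Nat.cast_sum]
  refine sum_congr rfl fun p hp => ?_
  obtain rfl := mem_antidiagonal.mp hp
  push_cast [Nat.cast_add_choose]
  field_simp [hfact]

theorem Wstar_one (n : ℕ) : Wstar 1 n = 1 := by
  simp [Wstar]

theorem Wstar_two (n : ℕ) : Wstar 2 n = n.centralBinom := by
  rw [Wstar_add 1 1]
  simp only [Wstar_one, mul_one, Finset.Nat.sum_antidiagonal_eq_sum_range_succ_mk,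
    Nat.sum_range_choose_sq, Nat.centralBinom_eq_two_mul_choose]

theorem Wstar_pos {d : ℕ} (hd : 0 < d) (n : ℕ) : 0 < Wstar d n := by
  refine sum_pos (fun x _ => pow_pos (Nat.multinomial_pos _ _) 2) ⟨Pi.single ⟨0, hd⟩ n, ?_⟩
  simp [Finset.Nat.mem_antidiagonalTuple]

end Convolution

section MacMahon

theorem sum_range_choose_add_mul_choose (a b r : ℕ) :
    ∑ i ∈ range (b + 1), a.choose (r + i) * b.choose i = (a + b).choose (r + b) := by
  have hvanish : ∀ i ∈ range r, a.choose i * b.choose (r + b - i) = 0 := fun i hi => by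
    have : b < r + b - i := by have := mem_range.mp hi; lia
    rw [Nat.choose_eq_zero_of_lt this, mul_zero]
  rw [Nat.add_choose_eq, Finset.Nat.sum_antidiagonal_eq_sum_range_succ_mk,
    show (r + b).succ = r + (b + 1) from rfl, sum_range_add _ r, sum_eq_zero hvanish, zero_add]
  refine sum_congr rfl fun i hi => ?_
  rw [Nat.add_sub_add_left, Nat.choose_symm (mem_range_succ_iff.mp hi)]

theorem sum_range_choose_mul_choose {b N : ℕ} (a : ℕ) (hN : b < N) :
    ∑ i ∈ range N, a.choose i * b.choose i = (a + b).choose b := by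
  obtain ⟨k, rfl⟩ := Nat.exists_eq_add_of_le hN
  have hvanish : ∀ i ∈ range k, a.choose (b + 1 + i) * b.choose (b + 1 + i) = 0 := fun i _ => by
    rw [Nat.choose_eq_zero_of_lt (by lia : b < b + 1 + i), mul_zero]
  rw [sum_range_add, sum_eq_zero hvanish, add_zero]
  simpa only [zero_add] using sum_range_choose_add_mul_choose a b 0

theorem choose_mul_sub_choose_comm (n i k : ℕ) :
    n.choose i * (n - i).choose k = n.choose k * (n - k).choose i := by
  have hi := Nat.choose_mul (n := n) (Nat.le_add_right i k)
  have hk := Nat.choose_mul (n := n) (Nat.le_add_left k i)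
  rw [Nat.add_sub_cancel_left] at hi
  rw [Nat.add_sub_cancel] at hk
  rw [← hi, ← hk, Nat.choose_symm_add]

theorem sum_range_choose_mul_choose_mul_choose {b i : ℕ} (a : ℕ) (hi : i ≤ b) :
    ∑ j ∈ range (b + 1), a.choose j * (b.choose j * j.choose i) =
      b.choose i * (a + b - i).choose b := by
  obtain ⟨c, rfl⟩ := Nat.exists_eq_add_of_le hi
  have hvanish : ∀ j ∈ range i, a.choose j * ((i + c).choose j * j.choose i) = 0 := fun j hj => by
    rw [Nat.choose_eq_zero_of_lt (mem_range.mp hj), mul_zero, mul_zero]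
  rw [add_assoc, sum_range_add, sum_eq_zero hvanish, zero_add,
    show a + (i + c) - i = a + c by lia, ← sum_range_choose_add_mul_choose, mul_sum]
  refine sum_congr rfl fun j _ => ?_
  rw [Nat.choose_mul (Nat.le_add_right i j), Nat.add_sub_cancel_left, Nat.add_sub_cancel_left]
  ring

theorem sum_range_choose_mul_choose_mul_add_choose (a b : ℕ) :
    ∑ j ∈ range (b + 1), a.choose j * b.choose j * (a + b + j).choose j =
      (a + b).choose b ^ 2 := by
  calc ∑ j ∈ range (b + 1), a.choose j * b.choose j * (a + b + j).choose j
      = ∑ j ∈ range (b + 1), ∑ i ∈ range (b + 1),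
          (a + b).choose i * (a.choose j * (b.choose j * j.choose i)) := by
        refine sum_congr rfl fun j hj => ?_
        rw [← sum_range_choose_mul_choose (a + b) (mem_range.mp hj), mul_sum]
        exact sum_congr rfl fun i _ => by ring
    _ = ∑ i ∈ range (b + 1), (a + b).choose b * (a.choose i * b.choose i) := by
        rw [sum_comm]
        refine sum_congr rfl fun i hi => ?_
        rw [← mul_sum, sum_range_choose_mul_choose_mul_choose a (mem_range_succ_iff.mp hi),
          mul_left_comm, choose_mul_sub_choose_comm, Nat.add_sub_cancel]
        ring
    _ = (a + b).choose b ^ 2 := by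
        rw [← mul_sum, sum_range_choose_mul_choose a b.lt_succ_self, sq]

theorem sum_range_min_choose_mul_choose_mul_add_choose (a b : ℕ) :
    ∑ j ∈ range (min a b + 1), a.choose j * b.choose j * (a + b + j).choose j =
      (a + b).choose b ^ 2 := by
  rw [← sum_range_choose_mul_choose_mul_add_choose]
  refine sum_subset (range_subset_range.mpr (by lia)) fun j hb hmin => ?_
  have : a < j := by simp only [mem_range] at hb hmin; lia
  rw [Nat.choose_eq_zero_of_lt this, zero_mul, zero_mul]

/-- The multinomial coefficient `(m + 3j)! / (j!³ m!)` of MacMahon's expansion of the cubes of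
binomial coefficients, written as a product of binomial coefficients to show that it is an integer
multiple of `C(2j, j)`. -/
def macMahonCoeff (j m : ℕ) : ℕ :=
  (m + 3 * j).choose (3 * j) * (3 * j).choose j * j.centralBinom

theorem cast_macMahonCoeff (j m : ℕ) :
    (macMahonCoeff j m : ℚ) = (m + 3 * j)! / (j ! ^ 3 * m !) := by
  rw [macMahonCoeff, Nat.centralBinom_eq_two_mul_choose, ← Nat.choose_symm_add (a := m),
    show 3 * j = j + (j + j) by ring, two_mul]
  push_cast [Nat.cast_add_choose]
  field_simp

theorem centralBinom_dvd_macMahonCoeff (j m : ℕ) : j.centralBinom ∣ macMahonCoeff j m :=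
  dvd_mul_left _ _

theorem choose_mul_choose_mul_choose_mul_add_choose (j p q : ℕ) :
    (p + j + (q + j)).choose (q + j) *
        ((p + j).choose j * (q + j).choose j * (p + j + (q + j) + j).choose j) =
      macMahonCoeff j (p + q) * (p + q).choose p := by
  refine Nat.cast_injective (R := ℚ) ?_
  simp only [← Nat.choose_symm_add (b := j), ← Nat.choose_symm_add (b := q + j)]
  push_cast [Nat.cast_add_choose, cast_macMahonCoeff]
  rw [show p + j + (q + j) + j = p + q + 3 * j by ring]
  field_simp

theorem choose_pow_three (a b : ℕ) :
    (a + b).choose a ^ 3 = ∑ j ∈ range (min a b + 1),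
      macMahonCoeff j (a - j + (b - j)) * (a - j + (b - j)).choose (a - j) := by
  rw [Nat.choose_symm_add, pow_succ', ← sum_range_min_choose_mul_choose_mul_add_choose, mul_sum]
  refine sum_congr rfl fun j hj => ?_
  obtain ⟨hja, hjb⟩ : j ≤ a ∧ j ≤ b := by have := mem_range.mp hj; lia
  obtain ⟨p, rfl⟩ := Nat.exists_eq_add_of_le' hja
  obtain ⟨q, rfl⟩ := Nat.exists_eq_add_of_le' hjb
  rw [Nat.add_sub_cancel, Nat.add_sub_cancel, choose_mul_choose_mul_choose_mul_add_choose]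

end MacMahon

section SuperCatalan

/-- The super Catalan number `S(a, b) = (2a)! (2b)! / (a! b! (a+b)!)`, as a rational number so that
its integrality need not be established. -/
def superCatalan (a b : ℕ) : ℚ :=
  (2 * a)! * (2 * b)! / (a ! * b ! * (a + b)!)

theorem superCatalan_self (a : ℕ) : superCatalan a a = a.centralBinom := by
  rw [superCatalan, Nat.centralBinom_eq_two_mul_choose, two_mul, Nat.cast_add_choose]
  field_simp

theorem choose_mul_superCatalan (a b : ℕ) :
    (a + b).choose a * superCatalan a b = a.centralBinom * b.centralBinom := by
  simp only [superCatalan, Nat.centralBinom_eq_two_mul_choose, two_mul, Nat.cast_add_choose]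
  field_simp

theorem superCatalan_succ_left_add_succ_right (a b : ℕ) :
    superCatalan (a + 1) b + superCatalan a (b + 1) = 4 * superCatalan a b := by
  simp only [superCatalan, mul_add, mul_one, Nat.factorial_succ, ← add_assoc, add_right_comm a 1 b]
  push_cast
  field_simp
  ring

theorem sum_antidiagonal_choose_mul_superCatalan (a b m : ℕ) :
    ∑ q ∈ antidiagonal m, m.choose q.1 * superCatalan (q.1 + a) (q.2 + b) =
      4 ^ m * superCatalan a b := by
  induction m generalizing a b with
  | zero => simp
  | succ m ih =>
    rw [sum_antidiagonal_choose_succ_mul (fun p q => superCatalan (p + a) (q + b)), pow_succ,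
      mul_assoc, ← superCatalan_succ_left_add_succ_right, mul_add, ← ih, ← ih, add_comm]
    congr 1 <;> refine sum_congr rfl fun q hq => ?_
    · rw [Nat.choose_symm_of_eq_add (mem_antidiagonal.mp hq).symm, add_assoc, add_comm 1]
    · rw [add_assoc, add_comm 1]

end SuperCatalan

section Domb

theorem Wstar_four_eq_sum_superCatalan (n : ℕ) :
    (Wstar 4 n : ℚ) =
      ∑ p ∈ antidiagonal n, ((p.1 + p.2).choose p.1 : ℚ) ^ 3 * superCatalan p.1 p.2 := by
  rw [Wstar_add 2 2, Nat.cast_sum]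
  refine sum_congr rfl fun p hp => ?_
  rw [← mem_antidiagonal.mp hp, Wstar_two, Wstar_two, pow_succ _ 2, mul_assoc,
    choose_mul_superCatalan]
  push_cast
  rfl

theorem sum_antidiagonal_sum_range_min {M : Type*} [AddCommMonoid M] (f : ℕ → ℕ → ℕ → M) (n : ℕ) :
    ∑ p ∈ antidiagonal n, ∑ j ∈ range (min p.1 p.2 + 1), f j (p.1 - j) (p.2 - j) =
      ∑ j ∈ range (n / 2 + 1), ∑ q ∈ antidiagonal (n - 2 * j), f j q.1 q.2 := by
  rw [sum_sigma', sum_sigma']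
  refine sum_nbij' (fun x => ⟨x.2, x.1.1 - x.2, x.1.2 - x.2⟩)
    (fun x => ⟨(x.2.1 + x.1, x.2.2 + x.1), x.1⟩) ?_ ?_ ?_ ?_ ?_
  · rintro ⟨⟨a, b⟩, j⟩ h
    simp only [mem_sigma, mem_antidiagonal, mem_range] at h ⊢
    lia
  · rintro ⟨j, p, q⟩ h
    simp only [mem_sigma, mem_antidiagonal, mem_range] at h ⊢
    lia
  · rintro ⟨⟨a, b⟩, j⟩ h
    simp only [mem_sigma, mem_antidiagonal, mem_range] at h ⊢
    grind
  · rintro ⟨j, p, q⟩ -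
    simp only [Nat.add_sub_cancel]
  · exact fun _ _ => rfl

theorem Wstar_four (n : ℕ) :
    Wstar 4 n = ∑ j ∈ range (n / 2 + 1),
      macMahonCoeff j (n - 2 * j) * (4 ^ (n - 2 * j) * j.centralBinom) := by
  let term (j p q : ℕ) : ℚ :=
    macMahonCoeff j (p + q) * ((p + q).choose p * superCatalan (p + j) (q + j))
  have hexpand (a b : ℕ) : ((a + b).choose a : ℚ) ^ 3 * superCatalan a b =
      ∑ j ∈ range (min a b + 1), term j (a - j) (b - j) := by
    rw [← Nat.cast_pow, choose_pow_three, Nat.cast_sum, sum_mul]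
    refine sum_congr rfl fun j hj => ?_
    obtain ⟨hja, hjb⟩ : j ≤ a ∧ j ≤ b := by have := mem_range.mp hj; lia
    simp only [term, Nat.sub_add_cancel hja, Nat.sub_add_cancel hjb, Nat.cast_mul, mul_assoc]
  have hcollect (j m : ℕ) : ∑ q ∈ antidiagonal m, term j q.1 q.2 =
      (macMahonCoeff j m * (4 ^ m * j.centralBinom) : ℕ) := by
    push_cast
    rw [← superCatalan_self, ← sum_antidiagonal_choose_mul_superCatalan, mul_sum]
    refine sum_congr rfl fun q hq => ?_
    rw [← mem_antidiagonal.mp hq]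
  refine Nat.cast_injective (R := ℚ) ?_
  simp only [Wstar_four_eq_sum_superCatalan, hexpand, sum_antidiagonal_sum_range_min, hcollect,
    Nat.cast_sum]

end Domb

section Divisibility

theorem s2_add_two_mul_le (m j : ℕ) : s2 (m + 2 * j) ≤ m + s2 j :=
  calc s2 (m + 2 * j) ≤ s2 m + s2 (2 * j) := s2_add_le m (2 * j)
    _ ≤ m + s2 j := add_le_add (s2_le_self m) (s2_two_mul j).le

theorem four_pow_s2_dvd_centralBinom_sq (n : ℕ) : 4 ^ s2 n ∣ n.centralBinom ^ 2 := by
  rw [show 4 = 2 ^ 2 from rfl, pow_right_comm]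
  exact pow_dvd_pow_of_dvd (two_pow_s2_dvd_centralBinom n) 2

theorem four_pow_s2_dvd_macMahonCoeff_mul (j m : ℕ) :
    4 ^ s2 (m + 2 * j) ∣ macMahonCoeff j m * (4 ^ m * j.centralBinom) :=
  calc 4 ^ s2 (m + 2 * j) ∣ 4 ^ (m + s2 j) := pow_dvd_pow 4 (s2_add_two_mul_le m j)
    _ = 4 ^ m * 4 ^ s2 j := pow_add 4 m (s2 j)
    _ ∣ 4 ^ m * j.centralBinom ^ 2 := mul_dvd_mul_left _ (four_pow_s2_dvd_centralBinom_sq j)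
    _ = j.centralBinom * (4 ^ m * j.centralBinom) := by ring
    _ ∣ macMahonCoeff j m * (4 ^ m * j.centralBinom) :=
        mul_dvd_mul_right (centralBinom_dvd_macMahonCoeff j m) _

theorem four_pow_s2_dvd_Wstar_four (n : ℕ) : 4 ^ s2 n ∣ Wstar 4 n := by
  rw [Wstar_four]
  refine dvd_sum fun j hj => ?_
  obtain ⟨m, rfl⟩ : ∃ m, n = m + 2 * j :=
    Nat.exists_eq_add_of_le' (by have := mem_range.mp hj; lia)
  rw [Nat.add_sub_cancel]
  exact four_pow_s2_dvd_macMahonCoeff_mul j m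

theorem four_pow_s2_dvd_Wstar_add {c d : ℕ} (hc : ∀ n, 4 ^ s2 n ∣ Wstar c n)
    (hd : ∀ n, 4 ^ s2 n ∣ Wstar d n) (n : ℕ) : 4 ^ s2 n ∣ Wstar (c + d) n := by
  rw [Wstar_add]
  refine dvd_sum fun p hp => Dvd.dvd.mul_left ?_ _
  rw [← mem_antidiagonal.mp hp]
  calc 4 ^ s2 (p.1 + p.2) ∣ 4 ^ (s2 p.1 + s2 p.2) := pow_dvd_pow 4 (s2_add_le p.1 p.2)
    _ = 4 ^ s2 p.1 * 4 ^ s2 p.2 := pow_add 4 _ _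
    _ ∣ Wstar c p.1 * Wstar d p.2 := mul_dvd_mul (hc p.1) (hd p.2)

theorem four_pow_s2_dvd_Wstar {d : ℕ} (hd : 4 ∣ d) (n : ℕ) : 4 ^ s2 n ∣ Wstar d n := by
  obtain ⟨k, rfl⟩ := hd
  induction k generalizing n with
  | zero => cases n <;> simp [Wstar, s2]
  | succ k ih => exact four_pow_s2_dvd_Wstar_add ih four_pow_s2_dvd_Wstar_four n

end Divisibility

theorem stmt_2_general {d : ℕ} (hd : 0 < d) (hd4 : 4 ∣ d) (n : ℕ) :
    3 * s2 n ≤ padicValNat 2 (W d n) := by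
  have hW : W d n ≠ 0 := mul_ne_zero n.centralBinom_ne_zero (Wstar_pos hd n).ne'
  rw [← padicValNat_dvd_iff_le hW]
  calc 2 ^ (3 * s2 n) = 2 ^ s2 n * 4 ^ s2 n := by
        rw [show 4 = 2 ^ 2 from rfl, ← pow_mul, ← pow_add]
        ring
    _ ∣ n.centralBinom * Wstar d n :=
        mul_dvd_mul (two_pow_s2_dvd_centralBinom n) (four_pow_s2_dvd_Wstar hd4 n)

theorem stmt_2 (d n : ℕ) (hd : 0 < d) (hd2 : padicValNat 2 d = 2) (hn : 0 < n) :
    3 * s2 n ≤ padicValNat 2 (W d n) :=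
  stmt_2_general hd ((padicValNat_dvd_iff_le hd.ne').mpr hd2.ge) n
end
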